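/- arXiv:2110.10458 — 3 statements merged into one kernel-verified Lean document; each statement's English description precedes it below -/
import Mathlib

section
/- There exists a unique sequence of maps (dt_n)_{n≥1}, dt_n : H_n(ℍ_ℂ) → ℍ_ℂ, such that: (i) each dt_n is continuous; (ii) dt₁((x₁₁)) = x₁₁; (iii) for every n ≥ 1 and every x = (x_{ij}) ∈ H_{n+1}(ℍ_ℂ) with x₁₁ ≠ 0, dt_{n+1}(x) = x₁₁ · dt_n((x_{ij} − x₁₁⁻¹·x_{i1}·x_{1j})_{2≤i,j≤n+1}). Moreover, all values of every dt_n lie in ℂ ⊆ ℍ_ℂ. -/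
/-! For a hermitian matrix `A` with corner entry `x`, put `p(t) = dt_n (B - t V)`, where `B` is the
lower right block and `V = (x_{i1} x_{1j})`; the recursion asks for `dt_{n+1}(A) = x p(x⁻¹)`. The
point is that `p` is affine, so that the right-hand side is `x p(0) + (p(1) - p(0))`. This formula
makes sense for every `x` and defines `dt` recursively as a polynomial, hence continuous, map with
values in `ℂ`.

Affinity is proved (`dt_schur_affine`) together with the identity `dt(A)² = det Â` (`dt_sq`) by
induction on the size. The Schur complement formula for `Â` gives `det Â = x² det Ŝ` with `S = B - x⁻¹ V`
(`det_hatM_corner`), so `x² p(x⁻¹)² = det Â`, which is continuous in `x` up to `x = 0`; as `p` is a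
polynomial, its degree is at most one (`natDegree_le_one`). Then `dt_{n+1}(A)² = det Â` follows for
`x ≠ 0`, and for `x = 0` by continuity.

Uniqueness: the recursion determines the maps where `x ≠ 0`, and these matrices are dense in the
hermitian ones. -/

noncomputable section

open Matrix

/-- The biquaternions `ℍ_ℂ`: quaternions with complex coefficients. -/
abbrev HC : Type := Quaternion ℂ

/-- The embedding `ℂ ⊆ ℍ_ℂ` as scalar biquaternions. -/
def cq (z : ℂ) : HC := ⟨z, 0, 0, 0⟩

/-- The `ℂ`-linear involution `x ↦ x⋄` (quaternion conjugation). -/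
def qdia (x : HC) : HC := ⟨x.re, -x.imI, -x.imJ, -x.imK⟩

/-- Coefficientwise complex conjugation `x ↦ x̄`. -/
def qbar (x : HC) : HC :=
  ⟨starRingEnd ℂ x.re, starRingEnd ℂ x.imI, starRingEnd ℂ x.imJ, starRingEnd ℂ x.imK⟩

/-- The conjugate-linear involution `x* = (x̄)⋄`. -/
def qstar (x : HC) : HC := qdia (qbar x)

/-- The natural (Euclidean/product) topology on the biquaternions `ℍ_ℂ ≅ ℂ⁴`. -/
instance : TopologicalSpace HC :=
  TopologicalSpace.induced (fun q : HC => (q.re, q.imI, q.imJ, q.imK)) inferInstance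

/-- The 2×2 complex matrix `x̂` associated to a biquaternion `x`. -/
def hat (x : HC) : Matrix (Fin 2) (Fin 2) ℂ :=
  !![x.re + Complex.I * x.imI, x.imJ + Complex.I * x.imK;
     -x.imJ + Complex.I * x.imK, x.re - Complex.I * x.imI]

/-- The `2n × 2n` complex matrix `Â` obtained by replacing every biquaternion entry `a`
of `A` by the 2×2 block `â`. -/
def hatM {n : ℕ} (A : Matrix (Fin n) (Fin n) HC) :
    Matrix (Fin n × Fin 2) (Fin n × Fin 2) ℂ :=
  Matrix.of fun p q => hat (A p.1 q.1) p.2 q.2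

/-- `A` is `⋄`-hermitian: `Aᵈ = A`, i.e. `(A j i)⋄ = A i j` for all `i j`.
`H_n(ℍ_ℂ)` is the collection of all such matrices. -/
def IsHerm {n : ℕ} (A : Matrix (Fin n) (Fin n) HC) : Prop :=
  ∀ i j, qdia (A j i) = A i j

/-- The defining properties of the sequence of determinants `(dt_n)_{n ≥ 1}`:
`D n` plays the role of `dt_{n+1} : H_{n+1}(ℍ_ℂ) → ℍ_ℂ`.
(i) continuity on `H_{n+1}(ℍ_ℂ)`; (ii) `dt₁((x₁₁)) = x₁₁`;
(iii) the inductive formula for `dt_{n+1}` when `x₁₁ ≠ 0`. -/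
def IsDtSeq (D : ∀ n : ℕ, Matrix (Fin (n + 1)) (Fin (n + 1)) HC → HC) : Prop :=
  (∀ n : ℕ, ContinuousOn (D n) {A | IsHerm A}) ∧
  (∀ A : Matrix (Fin 1) (Fin 1) HC, IsHerm A → D 0 A = A 0 0) ∧
  (∀ (n : ℕ) (A : Matrix (Fin (n + 2)) (Fin (n + 2)) HC), IsHerm A → A 0 0 ≠ 0 →
    D (n + 1) A = A 0 0 *
      D n (Matrix.of fun i j : Fin (n + 1) =>
        A i.succ j.succ - Ring.inverse (A 0 0) * A i.succ 0 * A 0 j.succ))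

open Polynomial Topology Filter

/-! ### The Schur complement and the recursive determinant -/

/-- The pencil `(x_{ij} - t · x_{i1} x_{1j})_{i,j ≥ 2}`; at `t = x₁₁⁻¹` it is the Schur
complement of the corner entry. -/
def schur {n : ℕ} (t : ℂ) (A : Matrix (Fin (n + 1)) (Fin (n + 1)) HC) :
    Matrix (Fin n) (Fin n) HC :=
  Matrix.of fun i j => A i.succ j.succ - cq t * A i.succ 0 * A 0 j.succ

/-- The determinant, given by the division-free recursion
`dt (n+1) A = x₁₁ p(0) + (p(1) - p(0))` with `p(t) = dt n (schur t A)`. For hermitian `A` the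
function `p` is affine, so this is `x₁₁ p(x₁₁⁻¹)` whenever `x₁₁ ≠ 0`. -/
def dt : ∀ n : ℕ, Matrix (Fin n) (Fin n) HC → ℂ
  | 0, _ => 1
  | n + 1, A => (A 0 0).re * dt n (schur 0 A) + (dt n (schur 1 A) - dt n (schur 0 A))

/-- `A` with its corner entry replaced by the scalar `s`. -/
def corner {n : ℕ} (A : Matrix (Fin (n + 1)) (Fin (n + 1)) HC) (s : ℂ) :
    Matrix (Fin (n + 1)) (Fin (n + 1)) HC :=
  Matrix.of fun i j => if i = 0 ∧ j = 0 then cq s else A i j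

@[simp] lemma cq_re (t : ℂ) : (cq t).re = t := rfl
@[simp] lemma cq_imI (t : ℂ) : (cq t).imI = 0 := rfl
@[simp] lemma cq_imJ (t : ℂ) : (cq t).imJ = 0 := rfl
@[simp] lemma cq_imK (t : ℂ) : (cq t).imK = 0 := rfl
@[simp] lemma qdia_re (x : HC) : (qdia x).re = x.re := rfl
@[simp] lemma qdia_imI (x : HC) : (qdia x).imI = -x.imI := rfl
@[simp] lemma qdia_imJ (x : HC) : (qdia x).imJ = -x.imJ := rfl
@[simp] lemma qdia_imK (x : HC) : (qdia x).imK = -x.imK := rfl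

lemma qdia_mul (x y : HC) : qdia (x * y) = qdia y * qdia x := by
  ext <;> simp <;> ring

lemma qdia_sub (x y : HC) : qdia (x - y) = qdia x - qdia y := by
  ext <;> simp <;> ring

lemma qdia_cq (t : ℂ) : qdia (cq t) = cq t := by
  ext <;> simp

lemma cq_comm (t : ℂ) (x : HC) : cq t * x = x * cq t := by
  ext <;> simp <;> ring

lemma corner_zero {n : ℕ} (A : Matrix (Fin (n + 1)) (Fin (n + 1)) HC) (s : ℂ) :
    corner A s 0 0 = cq s := by simp [corner]

lemma schur_corner {n : ℕ} (A : Matrix (Fin (n + 1)) (Fin (n + 1)) HC) (s t : ℂ) :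
    schur t (corner A s) = schur t A := by
  ext1 i j
  simp [schur, corner]

lemma IsHerm.schur {n : ℕ} {A : Matrix (Fin (n + 1)) (Fin (n + 1)) HC} (hA : IsHerm A) (t : ℂ) :
    IsHerm (schur t A) := by
  intro i j
  simp only [_root_.schur, Matrix.of_apply, qdia_sub, qdia_mul, qdia_cq, hA _ _]
  rw [mul_assoc (cq t), cq_comm, mul_assoc]

lemma IsHerm.corner {n : ℕ} {A : Matrix (Fin (n + 1)) (Fin (n + 1)) HC} (hA : IsHerm A) (s : ℂ) :
    IsHerm (corner A s) := by
  intro i j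
  simp only [_root_.corner, Matrix.of_apply, and_comm (a := j = 0)]
  split_ifs
  · exact qdia_cq s
  · exact hA i j

lemma IsHerm.diag {n : ℕ} {A : Matrix (Fin n) (Fin n) HC} (hA : IsHerm A) (i : Fin n) :
    A i i = cq (A i i).re := by
  have h := hA i i
  have hI := congrArg QuaternionAlgebra.imI h
  have hJ := congrArg QuaternionAlgebra.imJ h
  have hK := congrArg QuaternionAlgebra.imK h
  simp only [qdia] at hI hJ hK
  ext
  · rfl
  · exact self_eq_neg.mp hI.symm
  · exact self_eq_neg.mp hJ.symm
  · exact self_eq_neg.mp hK.symm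

lemma corner_self {n : ℕ} {A : Matrix (Fin (n + 1)) (Fin (n + 1)) HC} (hA : IsHerm A) :
    corner A (A 0 0).re = A := by
  ext1 i j
  simp only [corner, Matrix.of_apply]
  split_ifs with h
  · rw [h.1, h.2]; exact (hA.diag 0).symm
  · rfl

lemma inverse_cq {x : ℂ} (hx : x ≠ 0) : Ring.inverse (cq x) = cq x⁻¹ := by
  have h1 : cq x * cq x⁻¹ = 1 := by ext <;> simp [hx] <;> rfl
  have h2 : cq x⁻¹ * cq x = 1 := by ext <;> simp [hx] <;> rfl
  exact Ring.inverse_unit (⟨cq x, cq x⁻¹, h1, h2⟩ : HCˣ)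

/-! ### Continuity -/

lemma continuous_HC_iff {X : Type*} [TopologicalSpace X] {f : X → HC} :
    Continuous f ↔ Continuous (fun x => (f x).re) ∧ Continuous (fun x => (f x).imI) ∧
      Continuous (fun x => (f x).imJ) ∧ Continuous (fun x => (f x).imK) := by
  rw [continuous_induced_rng]
  simp only [Function.comp_def, continuous_prodMk]

lemma continuous_cq : Continuous cq := by
  rw [continuous_HC_iff]
  simp only [cq]
  refine ⟨?_, ?_, ?_, ?_⟩ <;> fun_prop

lemma continuous_HC_mul {X : Type*} [TopologicalSpace X] {f g : X → HC} (hf : Continuous f)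
    (hg : Continuous g) : Continuous fun x => f x * g x := by
  rw [continuous_HC_iff] at *
  obtain ⟨_, _, _, _⟩ := hf
  obtain ⟨_, _, _, _⟩ := hg
  simp only [Quaternion.re_mul, Quaternion.imI_mul, Quaternion.imJ_mul, Quaternion.imK_mul]
  refine ⟨?_, ?_, ?_, ?_⟩ <;> fun_prop

lemma continuous_HC_sub {X : Type*} [TopologicalSpace X] {f g : X → HC} (hf : Continuous f)
    (hg : Continuous g) : Continuous fun x => f x - g x := by
  rw [continuous_HC_iff] at *
  obtain ⟨_, _, _, _⟩ := hf
  obtain ⟨_, _, _, _⟩ := hg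
  simp only [Quaternion.re_sub, Quaternion.imI_sub, Quaternion.imJ_sub, Quaternion.imK_sub]
  refine ⟨?_, ?_, ?_, ?_⟩ <;> fun_prop

instance : T2Space HC := by
  refine T2Space.of_injective_continuous (f := fun q : HC => (q.re, q.imI, q.imJ, q.imK))
    (fun a b h => ?_) continuous_induced_dom
  simp only [Prod.mk.injEq] at h
  exact Quaternion.ext _ _ h.1 h.2.1 h.2.2.1 h.2.2.2

lemma continuous_schur {n : ℕ} (t : ℂ) :
    Continuous (schur t : Matrix (Fin (n + 1)) (Fin (n + 1)) HC → _) := by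
  refine continuous_matrix fun i j => ?_
  exact continuous_HC_sub (continuous_id.matrix_elem _ _)
    (continuous_HC_mul (continuous_HC_mul continuous_const (continuous_id.matrix_elem _ _))
      (continuous_id.matrix_elem _ _))

lemma continuous_dt (n : ℕ) : Continuous (dt n) := by
  induction n with
  | zero => exact continuous_const
  | succ n ih =>
    have h (t : ℂ) : Continuous fun A : Matrix (Fin (n + 1)) (Fin (n + 1)) HC =>
        dt n (schur t A) := ih.comp (continuous_schur t)
    have hre : Continuous fun A : Matrix (Fin (n + 1)) (Fin (n + 1)) HC => (A 0 0).re :=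
      (continuous_HC_iff.mp (continuous_id.matrix_elem 0 0)).1
    simp only [dt]
    fun_prop

lemma continuous_corner {n : ℕ} (A : Matrix (Fin (n + 1)) (Fin (n + 1)) HC) :
    Continuous (corner A) := by
  refine continuous_matrix fun i j => ?_
  simp only [corner, Matrix.of_apply]
  split_ifs
  · exact continuous_cq
  · exact continuous_const

lemma continuous_hatM {n : ℕ} : Continuous (hatM (n := n)) := by
  refine continuous_matrix fun p q => ?_
  obtain ⟨_, _, _, _⟩ := continuous_HC_iff.mp
    ((continuous_id (X := Matrix (Fin n) (Fin n) HC)).matrix_elem p.1 q.1)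
  simp only [id] at *
  obtain ⟨i, a⟩ := p
  obtain ⟨j, b⟩ := q
  fin_cases a <;> fin_cases b <;> simp [hatM, hat] <;> fun_prop

/-! ### The complex determinant of a Schur complement -/

lemma hat_mul (x y : HC) : hat (x * y) = hat x * hat y := by
  ext a b
  fin_cases a <;> fin_cases b <;> simp [hat, Matrix.mul_apply, Fin.sum_univ_two] <;>
    ring_nf <;> simp only [Complex.I_sq] <;> ring

lemma hat_sub (x y : HC) : hat (x - y) = hat x - hat y := by
  ext a b
  fin_cases a <;> fin_cases b <;> simp [hat] <;> ring

lemma hat_cq (t : ℂ) : hat (cq t) = t • (1 : Matrix (Fin 2) (Fin 2) ℂ) := by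
  ext a b
  fin_cases a <;> fin_cases b <;> simp [hat, cq]

/-- Splits the index set of `hatM A` into the corner block and the rest. -/
def splitEquiv (n : ℕ) : Fin 2 ⊕ (Fin n × Fin 2) ≃ Fin (n + 1) × Fin 2 where
  toFun := Sum.elim (fun a => (0, a)) (fun p => (p.1.succ, p.2))
  invFun p := Fin.cases (Sum.inl p.2) (fun i => Sum.inr (i, p.2)) p.1
  left_inv := by rintro (a | ⟨i, a⟩) <;> simp
  right_inv := by
    rintro ⟨i, a⟩
    cases i using Fin.cases <;> simp

lemma det_hatM_corner {n : ℕ} (A : Matrix (Fin (n + 1)) (Fin (n + 1)) HC) {x : ℂ} (hx : x ≠ 0) :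
    (hatM (corner A x)).det = x ^ 2 * (hatM (schur x⁻¹ A)).det := by
  let U : Matrix (Fin 2) (Fin n × Fin 2) ℂ := Matrix.of fun a p => hat (A 0 p.1.succ) a p.2
  let V : Matrix (Fin n × Fin 2) (Fin 2) ℂ := Matrix.of fun p a => hat (A p.1.succ 0) p.2 a
  let B : Matrix (Fin n × Fin 2) (Fin n × Fin 2) ℂ :=
    Matrix.of fun p q => hat (A p.1.succ q.1.succ) p.2 q.2
  let T : Matrix (Fin 2) (Fin 2) ℂ := x • 1
  have hXu : IsUnit T.det := by simp [T, hx]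
  let _ : Invertible T := Matrix.invertibleOfIsUnitDet T hXu
  have hinv : ⅟T = x⁻¹ • (1 : Matrix (Fin 2) (Fin 2) ℂ) := by
    rw [invOf_eq_right_inv]
    simp [T, smul_smul, hx]
  have h1 : (hatM (corner A x)).submatrix (splitEquiv n) (splitEquiv n)
      = Matrix.fromBlocks T U V B := by
    ext p q
    rcases p with a | ⟨i, a⟩ <;> rcases q with b | ⟨j, b⟩ <;>
      simp [splitEquiv, hatM, corner, T, U, V, B, hat_cq]
  have h2 : B - V * ⅟T * U = hatM (schur x⁻¹ A) := by
    rw [hinv]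
    ext ⟨i, a⟩ ⟨j, b⟩
    simp [hatM, schur, hat_sub, hat_mul, hat_cq, U, V, B, Matrix.mul_apply]
    ring
  rw [← Matrix.det_submatrix_equiv_self (splitEquiv n), h1, Matrix.det_fromBlocks₁₁, h2]
  simp [T]

/-! ### Polynomial dependence on a parameter -/

/-- `f` is a polynomial function. -/
def IsPolyFun (f : ℂ → ℂ) : Prop := ∃ P : ℂ[X], ∀ t, f t = P.eval t

lemma IsPolyFun.const (c : ℂ) : IsPolyFun fun _ => c := ⟨C c, by simp⟩

lemma IsPolyFun.add {f g : ℂ → ℂ} (hf : IsPolyFun f) (hg : IsPolyFun g) : IsPolyFun fun t => f t + g t := by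
  obtain ⟨P, hP⟩ := hf
  obtain ⟨Q, hQ⟩ := hg
  exact ⟨P + Q, by simp [hP, hQ]⟩

lemma IsPolyFun.sub {f g : ℂ → ℂ} (hf : IsPolyFun f) (hg : IsPolyFun g) : IsPolyFun fun t => f t - g t := by
  obtain ⟨P, hP⟩ := hf
  obtain ⟨Q, hQ⟩ := hg
  exact ⟨P - Q, by simp [hP, hQ]⟩

lemma IsPolyFun.mul {f g : ℂ → ℂ} (hf : IsPolyFun f) (hg : IsPolyFun g) : IsPolyFun fun t => f t * g t := by
  obtain ⟨P, hP⟩ := hf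
  obtain ⟨Q, hQ⟩ := hg
  exact ⟨P * Q, by simp [hP, hQ]⟩

/-- A biquaternion-valued function all of whose coordinates are polynomial. -/
def IsPolyQ (f : ℂ → HC) : Prop :=
  IsPolyFun (fun t => (f t).re) ∧ IsPolyFun (fun t => (f t).imI) ∧
    IsPolyFun (fun t => (f t).imJ) ∧ IsPolyFun (fun t => (f t).imK)

lemma IsPolyQ.const (c : HC) : IsPolyQ fun _ => c :=
  ⟨IsPolyFun.const _, IsPolyFun.const _, IsPolyFun.const _, IsPolyFun.const _⟩

lemma IsPolyQ.cq : IsPolyQ cq :=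
  ⟨⟨X, by simp⟩, IsPolyFun.const 0, IsPolyFun.const 0, IsPolyFun.const 0⟩

lemma IsPolyQ.sub {f g : ℂ → HC} (hf : IsPolyQ f) (hg : IsPolyQ g) :
    IsPolyQ fun t => f t - g t :=
  ⟨hf.1.sub hg.1, hf.2.1.sub hg.2.1, hf.2.2.1.sub hg.2.2.1, hf.2.2.2.sub hg.2.2.2⟩

lemma IsPolyQ.mul {f g : ℂ → HC} (hf : IsPolyQ f) (hg : IsPolyQ g) :
    IsPolyQ fun t => f t * g t := by
  obtain ⟨f1, f2, f3, f4⟩ := hf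
  obtain ⟨g1, g2, g3, g4⟩ := hg
  simp only [IsPolyQ, Quaternion.re_mul, Quaternion.imI_mul, Quaternion.imJ_mul,
    Quaternion.imK_mul]
  exact ⟨(((f1.mul g1).sub (f2.mul g2)).sub (f3.mul g3)).sub (f4.mul g4),
    (((f1.mul g2).add (f2.mul g1)).add (f3.mul g4)).sub (f4.mul g3),
    (((f1.mul g3).sub (f2.mul g4)).add (f3.mul g1)).add (f4.mul g2),
    (((f1.mul g4).add (f2.mul g3)).sub (f3.mul g2)).add (f4.mul g1)⟩

lemma isPolyFun_dt (n : ℕ) (A : ℂ → Matrix (Fin n) (Fin n) HC)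
    (hA : ∀ i j, IsPolyQ fun t => A t i j) : IsPolyFun fun t => dt n (A t) := by
  induction n with
  | zero => exact IsPolyFun.const 1
  | succ n ih =>
    have h (c : ℂ) : IsPolyFun fun t => dt n (schur c (A t)) := ih _ fun i j =>
      (hA _ _).sub (((IsPolyQ.const (_root_.cq c)).mul (hA _ _)).mul (hA _ _))
    exact ((hA 0 0).1.mul (h 0)).add ((h 1).sub (h 0))

/-! ### Affinity of the pencil and the square of the determinant -/

/-- If `x² P(x⁻¹)²` extends continuously to `x = 0`, then `P` has degree at most one: otherwise
the leading coefficient of `P`, the value at `0` of `x ^ N * P(x⁻¹)`, would vanish. -/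
lemma natDegree_le_one (P : ℂ[X]) (r : ℂ → ℂ) (hr : Continuous r)
    (h : ∀ x, x ≠ 0 → x ^ 2 * P.eval x⁻¹ ^ 2 = r x) : P.natDegree ≤ 1 := by
  by_contra! hN
  obtain ⟨k, hk⟩ : ∃ k, P.natDegree = k + 2 := ⟨P.natDegree - 2, by omega⟩
  have hrev : ∀ x : ℂ, x ≠ 0 → P.reverse.eval x = x ^ (k + 2) * P.eval x⁻¹ := by
    intro x hx
    let _ := invertibleOfNonzero (inv_ne_zero hx)
    have := Polynomial.eval₂_reverse_mul_pow (RingHom.id ℂ) x⁻¹ P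
    rw [invOf_eq_inv, inv_inv, hk] at this
    rw [Polynomial.eval, Polynomial.eval, ← this, mul_comm, mul_assoc, ← mul_pow, inv_mul_cancel₀ hx, one_pow, mul_one]
  have heq : (fun x => P.reverse.eval x ^ 2) = fun x => x ^ (2 * k + 2) * r x := by
    refine Continuous.ext_on (dense_compl_singleton (0 : ℂ)) (by fun_prop) (by fun_prop) ?_
    intro x hx
    simp only [hrev x hx, ← h x hx]
    ring
  have h0 := congrFun heq 0
  simp only [← Polynomial.coeff_zero_eq_eval_zero, Polynomial.coeff_zero_reverse] at h0
  have : P.leadingCoeff = 0 := by simpa using h0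
  rw [Polynomial.leadingCoeff_eq_zero] at this
  simp [this] at hN

/-- If `dt n` squares to the complex determinant, then `t ↦ dt n (schur t A)` is affine. -/
lemma dt_schur_affine {n : ℕ}
    (hsq : ∀ B : Matrix (Fin n) (Fin n) HC, IsHerm B → dt n B ^ 2 = (hatM B).det)
    {A : Matrix (Fin (n + 1)) (Fin (n + 1)) HC} (hA : IsHerm A) (t : ℂ) :
    dt n (schur t A) = dt n (schur 0 A) + t * (dt n (schur 1 A) - dt n (schur 0 A)) := by
  obtain ⟨P, hP⟩ := isPolyFun_dt n (fun t => schur t A) fun i j =>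
    (IsPolyQ.const _).sub ((IsPolyQ.cq.mul (IsPolyQ.const _)).mul (IsPolyQ.const _))
  have hdeg : P.natDegree ≤ 1 := by
    refine natDegree_le_one P (fun x => (hatM (corner A x)).det)
      ((continuous_hatM.comp (continuous_corner A)).matrix_det) fun x hx => ?_
    rw [det_hatM_corner A hx, ← hP, hsq _ (hA.schur _)]
  obtain ⟨a, b, rfl⟩ := Polynomial.exists_eq_X_add_C_of_natDegree_le_one hdeg
  simp only [hP]
  simp
  ring

lemma dt_succ_of_sq {n : ℕ}
    (hsq : ∀ B : Matrix (Fin n) (Fin n) HC, IsHerm B → dt n B ^ 2 = (hatM B).det)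
    {A : Matrix (Fin (n + 1)) (Fin (n + 1)) HC} (hA : IsHerm A) (hx : (A 0 0).re ≠ 0) :
    dt (n + 1) A = (A 0 0).re * dt n (schur (A 0 0).re⁻¹ A) := by
  rw [dt_schur_affine hsq hA, dt]
  field_simp

lemma dt_sq (n : ℕ) : ∀ A : Matrix (Fin n) (Fin n) HC, IsHerm A →
    dt n A ^ 2 = (hatM A).det := by
  induction n with
  | zero => intro A _; simp [dt]
  | succ n ih =>
    intro A hA
    -- Both sides are continuous in the corner entry, so it may be assumed nonzero.
    have h : (fun x => dt (n + 1) (corner A x) ^ 2) = fun x => (hatM (corner A x)).det := by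
      refine Continuous.ext_on (dense_compl_singleton (0 : ℂ))
        (((continuous_dt _).comp (continuous_corner A)).pow 2)
        ((continuous_hatM.comp (continuous_corner A)).matrix_det) ?_
      intro x hx
      have hre : (corner A x 0 0).re = x := by rw [corner_zero]; rfl
      have := dt_succ_of_sq ih (hA.corner x) (by rwa [hre])
      rw [hre, schur_corner] at this
      simp only [this, det_hatM_corner A hx, mul_pow, ih _ (hA.schur _)]
    have := congrFun h (A 0 0).re
    simpa only [corner_self hA] using this

lemma dt_succ {n : ℕ} {A : Matrix (Fin (n + 1)) (Fin (n + 1)) HC} (hA : IsHerm A)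
    (hx : (A 0 0).re ≠ 0) :
    dt (n + 1) A = (A 0 0).re * dt n (schur (A 0 0).re⁻¹ A) :=
  dt_succ_of_sq (dt_sq n) hA hx

/-! ### Existence and uniqueness -/

lemma re_ne_zero {n : ℕ} {A : Matrix (Fin (n + 1)) (Fin (n + 1)) HC} (hA : IsHerm A)
    (h : A 0 0 ≠ 0) : (A 0 0).re ≠ 0 := by
  intro h0
  apply h
  rw [hA.diag 0, h0]
  rfl

lemma schur_inverse {n : ℕ} {A : Matrix (Fin (n + 1)) (Fin (n + 1)) HC} (hA : IsHerm A)
    (h : A 0 0 ≠ 0) :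
    (Matrix.of fun i j : Fin n =>
      A i.succ j.succ - Ring.inverse (A 0 0) * A i.succ 0 * A 0 j.succ)
      = schur (A 0 0).re⁻¹ A := by
  have : Ring.inverse (A 0 0) = cq (A 0 0).re⁻¹ := by
    conv_lhs => rw [hA.diag 0]
    exact inverse_cq (re_ne_zero hA h)
  rw [this, schur]

lemma cq_mul (a b : ℂ) : cq (a * b) = cq a * cq b := by
  ext <;> simp

lemma isDtSeq_dt : IsDtSeq fun n A => cq (dt (n + 1) A) := by
  refine ⟨fun n => (continuous_cq.comp (continuous_dt _)).continuousOn, ?_, ?_⟩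
  · intro A hA
    simp only [dt]
    conv_rhs => rw [hA.diag 0]
    simp
  · intro n A hA h
    rw [schur_inverse hA h]
    simp only []
    rw [dt_succ hA (re_ne_zero hA h), cq_mul, ← hA.diag 0]

lemma IsDtSeq.unique {D D' : ∀ n : ℕ, Matrix (Fin (n + 1)) (Fin (n + 1)) HC → HC}
    (hD : IsDtSeq D) (hD' : IsDtSeq D') (n : ℕ) :
    ∀ A : Matrix (Fin (n + 1)) (Fin (n + 1)) HC, IsHerm A → D' n A = D n A := by
  induction n with
  | zero => intro A hA; rw [hD.2.1 A hA, hD'.2.1 A hA]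
  | succ n ih =>
    intro A hA
    have hcont {E : ∀ n : ℕ, Matrix (Fin (n + 1)) (Fin (n + 1)) HC → HC} (hE : IsDtSeq E) :
        Continuous fun x => E (n + 1) (corner A x) :=
      (hE.1 (n + 1)).comp_continuous (continuous_corner A) fun x => hA.corner x
    -- The recursion settles all nonzero corner entries, a dense set.
    have h : (fun x => D' (n + 1) (corner A x)) = fun x => D (n + 1) (corner A x) := by
      refine Continuous.ext_on (dense_compl_singleton (0 : ℂ)) (hcont hD') (hcont hD) ?_
      intro x hx
      have hne : corner A x 0 0 ≠ 0 := by
        rw [corner_zero]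
        exact fun h => hx (congrArg QuaternionAlgebra.re h)
      have hH := hA.corner x
      simp only [hD.2.2 n _ hH hne, hD'.2.2 n _ hH hne, schur_inverse hH hne,
        ih _ (hH.schur _)]
    have := congrFun h (A 0 0).re
    simpa only [corner_self hA] using this

/-- There exists a unique sequence of maps `(dt_n)_{n≥1}`,
`dt_n : H_n(ℍ_ℂ) → ℍ_ℂ`, which is continuous, satisfies `dt₁((x₁₁)) = x₁₁` and the
inductive formula `dt_{n+1}(x) = x₁₁ · dt_n((x_{ij} − x₁₁⁻¹ x_{i1} x_{1j})_{2≤i,j≤n+1})`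
whenever `x₁₁ ≠ 0`; moreover all its values lie in `ℂ ⊆ ℍ_ℂ`. -/
theorem statement0 :
    ∃ D : ∀ n : ℕ, Matrix (Fin (n + 1)) (Fin (n + 1)) HC → HC,
      IsDtSeq D ∧
      (∀ (n : ℕ) (A : Matrix (Fin (n + 1)) (Fin (n + 1)) HC), IsHerm A →
        ∃ z : ℂ, D n A = cq z) ∧
      (∀ D' : ∀ n : ℕ, Matrix (Fin (n + 1)) (Fin (n + 1)) HC → HC, IsDtSeq D' →
        ∀ (n : ℕ) (A : Matrix (Fin (n + 1)) (Fin (n + 1)) HC), IsHerm A →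
          D' n A = D n A) := by
  exact ⟨fun n A => cq (dt (n + 1) A), isDtSeq_dt, fun n A _ => ⟨_, rfl⟩,
    fun D' hD' n => isDtSeq_dt.unique hD' n⟩
end
end

section
/- Let h₁, h₂ ∈ ℍ be real quaternions of norm 1. Then the map T : 𝕆_ℝ → 𝕆_ℝ defined by T(x₁,x₂) = (x₁h₁, x₂h₂) is an asymmetric triple isomorphism of 𝕆_ℝ. If moreover h₁ = 1, then T is an automorphism of 𝕆_ℝ. -/
/-!
Expanding the Cayley–Dickson product, the components of `(x⬝y⋄)⬝z` are
`x₁y₁⋄z₁ + y₂x₂⋄z₁ + z₂y₂⋄x₁ - z₂x₂⋄y₁` and `y₁x₁⋄z₂ + x₂y₂⋄z₂ - z₁x₁⋄y₂ + z₁y₁⋄x₂`.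
In every monomial `a b⋄ c`, the factors `a` and `b` are components with the same index `i`, so the
map `T` only inserts `hᵢ hᵢ⋄ = 1` between them, while `c` has the index of the component of the
result, so `T` multiplies the monomial on the right by the required `h₁` or `h₂`.
For `h₁ = 1`, the same cancellation in the monomial `y₂x₂⋄` of `x⬝y` gives multiplicativity.
-/

noncomputable section

/-- The real quaternions `ℍ`. -/
abbrev HR : Type := Quaternion ℝ

/-- Quaternion conjugation `x ↦ x⋄` on `ℍ`. -/
def rqdia (x : HR) : HR := ⟨x.re, -x.imI, -x.imJ, -x.imK⟩

/-- The real octonions `𝕆_ℝ`, modelled as pairs of real quaternions. -/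
abbrev OR : Type := HR × HR

/-- Cayley–Dickson multiplication on `𝕆_ℝ`. -/
def rmul (x y : OR) : OR :=
  (x.1 * y.1 - y.2 * rqdia x.2, rqdia x.1 * y.2 + y.1 * x.2)

/-- The octonion unit `1 = (1, 0)`. -/
def rone : OR := (1, 0)

/-- The linear involution `x ↦ x⋄` on `𝕆_ℝ`. -/
def rdia (x : OR) : OR := (rqdia x.1, -x.2)

/-- The squared Euclidean norm of `ℝ⁸`: `‖(x₁,x₂)‖² = ‖x₁‖² + ‖x₂‖²`. -/
def rnormSq (x : OR) : ℝ := ‖x.1‖ ^ 2 + ‖x.2‖ ^ 2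

/-- An asymmetric triple isomorphism of `𝕆_ℝ`: a real-linear bijection `T` with
`T((x⬝y⋄)⬝z) = (T(x)⬝T(y)⋄)⬝T(z)` for all `x, y, z`. -/
def IsATI (T : OR → OR) : Prop :=
  IsLinearMap ℝ T ∧ Function.Bijective T ∧
    ∀ x y z : OR, T (rmul (rmul x (rdia y)) z) = rmul (rmul (T x) (rdia (T y))) (T z)

/-- An automorphism of `𝕆_ℝ`: a real-linear bijection `T` with `T(1) = 1`,
`T(x⋄) = T(x)⋄` and `T(x⬝y) = T(x)⬝T(y)`. -/
def IsAutOR (T : OR → OR) : Prop :=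
  IsLinearMap ℝ T ∧ Function.Bijective T ∧ T rone = rone ∧
    (∀ x : OR, T (rdia x) = rdia (T x)) ∧
    ∀ x y : OR, T (rmul x y) = rmul (T x) (T y)

theorem rqdia_eq_star (x : HR) : rqdia x = star x := by
  ext <;> simp [rqdia]

theorem mul_star_of_norm_one {h : HR} (hn : ‖h‖ = 1) : h * star h = 1 := by
  rw [Quaternion.self_mul_star, Quaternion.normSq_eq_norm_mul_self, hn]
  simp

theorem mul_star_cancel_of_norm_one {h : HR} (hn : ‖h‖ = 1) (a : HR) : h * (star h * a) = a := by
  rw [← mul_assoc, mul_star_of_norm_one hn, one_mul]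

theorem isLinearMap_rightMul (h₁ h₂ : HR) :
    IsLinearMap ℝ (fun x : OR => (x.1 * h₁, x.2 * h₂)) where
  map_add x y := by simp [add_mul]
  map_smul c x := by simp

theorem bijective_rightMul {h₁ h₂ : HR} (hn₁ : ‖h₁‖ = 1) (hn₂ : ‖h₂‖ = 1) :
    Function.Bijective (fun x : OR => (x.1 * h₁, x.2 * h₂)) := by
  have h₁0 : h₁ ≠ 0 := norm_ne_zero_iff.mp (by simp [hn₁])
  have h₂0 : h₂ ≠ 0 := norm_ne_zero_iff.mp (by simp [hn₂])
  exact (mulRight_bijective₀ h₁ h₁0).prodMap (mulRight_bijective₀ h₂ h₂0)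

/-- For norm-one real quaternions `h₁, h₂`, the map
`T(x₁,x₂) = (x₁h₁, x₂h₂)` is an asymmetric triple isomorphism of `𝕆_ℝ`;
if moreover `h₁ = 1`, it is an automorphism of `𝕆_ℝ`. -/
theorem statement9 (h₁ h₂ : HR) (hn₁ : ‖h₁‖ = 1) (hn₂ : ‖h₂‖ = 1) :
    IsATI (fun x : OR => (x.1 * h₁, x.2 * h₂)) ∧
    (h₁ = 1 → IsAutOR (fun x : OR => (x.1 * h₁, x.2 * h₂))) := by
  refine ⟨⟨isLinearMap_rightMul h₁ h₂, bijective_rightMul hn₁ hn₂, fun x y z => ?_⟩, fun h => ?_⟩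
  · simp [rmul, rdia, rqdia_eq_star, add_mul, mul_add, sub_mul, mul_assoc,
      mul_star_cancel_of_norm_one hn₁, mul_star_cancel_of_norm_one hn₂]
  · refine ⟨isLinearMap_rightMul h₁ h₂, bijective_rightMul hn₁ hn₂, ?_, fun x => ?_, fun x y => ?_⟩
    · simp [rone, h]
    · simp [rdia, h]
    · simp [rmul, rqdia_eq_star, h, add_mul, mul_assoc, mul_star_cancel_of_norm_one hn₂]
end
end

section
/- Let u ∈ 𝕆_ℝ be a nonzero element. Then: (a) there is an asymmetric triple isomorphism T of 𝕆_ℝ with T(u) ∈ ℝ·1; (b) there is an automorphism T of 𝕆_ℝ with T(u) ∈ span_ℝ{e₀, e₁}; (c) there is an automorphism T of 𝕆_ℝ with T(e₁) = e₁ and T(u) ∈ span_ℝ{e₀, e₁, e₂}. -/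
/-!
The proof uses two explicit kinds of automorphisms and one kind of triple isomorphism.

* For unit quaternions `p, q`, the map `φ_{p,q} (x₁, x₂) = (p x₁ p⋄, p x₂ q⋄)` is an automorphism.
* The signed permutation `σ` of the basis which fixes `1` and `i = e₁` and exchanges `j = e₂` with
  `ℓ = (0, 1)` (hence `k = i j` with `i ℓ`, while `j ℓ` and `i (j ℓ)` change sign) is an
  automorphism.
* For a unit quaternion `p`, the map `(x₁, x₂) ↦ (p x₁, p x₂)` is an asymmetric triple isomorphism.

For (c), all maps used fix `e₁`. Some `φ_{1,q}` turns `x₂` into a real multiple of `j`; then `σ`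
makes the first component an element `a + b i` of `span {1, i}`, another `φ_{1,q}` makes the second
component a real number `r`, and `σ` sends the result to `(a + b i + r j, 0)`.
For (b), some `φ_{p,1}`, acting as a rotation of the imaginary quaternions, then moves `b i + r j`
onto the line through `i`.
For (a), the resulting element `(w, 0)` is multiplied on the left by the unit quaternion `w⋄ / ‖w‖`.
-/

noncomputable section

/-- The canonical basis vector `e₀ = 1 = (1,0)`. -/
def e₀ : OR := rone

/-- The canonical basis vector `e₁ = (i, 0)`. -/
def e₁ : OR := ((⟨0, 1, 0, 0⟩ : HR), 0)

/-- The canonical basis vector `e₂ = (j, 0)`. -/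
def e₂ : OR := ((⟨0, 0, 1, 0⟩ : HR), 0)

/-- The quaternion `a + b i + c j + d k`. Kept as a function of its own so that the component lemmas
for `Quaternion`, rather than those for `QuaternionAlgebra`, apply to it. -/
def mkQ (a b c d : ℝ) : HR := ⟨a, b, c, d⟩

@[simp] theorem mkQ_re (a b c d : ℝ) : (mkQ a b c d).re = a := rfl
@[simp] theorem mkQ_imI (a b c d : ℝ) : (mkQ a b c d).imI = b := rfl
@[simp] theorem mkQ_imJ (a b c d : ℝ) : (mkQ a b c d).imJ = c := rfl
@[simp] theorem mkQ_imK (a b c d : ℝ) : (mkQ a b c d).imK = d := rfl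

@[simp] theorem HR_zero_re : (0 : HR).re = 0 := rfl
@[simp] theorem HR_zero_imI : (0 : HR).imI = 0 := rfl
@[simp] theorem HR_zero_imJ : (0 : HR).imJ = 0 := rfl
@[simp] theorem HR_zero_imK : (0 : HR).imK = 0 := rfl
@[simp] theorem HR_one_re : (1 : HR).re = 1 := rfl
@[simp] theorem HR_one_imI : (1 : HR).imI = 0 := rfl
@[simp] theorem HR_one_imJ : (1 : HR).imJ = 0 := rfl
@[simp] theorem HR_one_imK : (1 : HR).imK = 0 := rfl

theorem e₁_eq : e₁ = (mkQ 0 1 0 0, 0) := rfl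

theorem e₂_eq : e₂ = (mkQ 0 0 1 0, 0) := rfl

theorem OR_ext {x y : OR} (h0 : x.1.re = y.1.re) (h1 : x.1.imI = y.1.imI)
    (h2 : x.1.imJ = y.1.imJ) (h3 : x.1.imK = y.1.imK) (h4 : x.2.re = y.2.re)
    (h5 : x.2.imI = y.2.imI) (h6 : x.2.imJ = y.2.imJ) (h7 : x.2.imK = y.2.imK) : x = y :=
  Prod.ext (Quaternion.ext _ _ h0 h1 h2 h3) (Quaternion.ext _ _ h4 h5 h6 h7)

/-- The map `φ_{p,q} (x₁, x₂) = (p x₁ p⋄, p x₂ q⋄)`, an automorphism when `p` and `q` are unit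
quaternions. -/
def quatAut (p q : HR) (x : OR) : OR := (p * x.1 * star p, p * x.2 * star q)

/-- The signed permutation of the basis that fixes `1` and `i` and exchanges `j` with `(0, 1)`. -/
def swapAut (x : OR) : OR :=
  (mkQ x.1.re x.1.imI x.2.re (-x.2.imI), mkQ x.1.imJ (-x.1.imK) (-x.2.imJ) (-x.2.imK))

theorem isAutOR_quatAut {p q : HR} (hp : star p * p = 1) (hp' : p * star p = 1)
    (hq : star q * q = 1) (hq' : q * star q = 1) : IsAutOR (quatAut p q) := by
  have cp : ∀ z : HR, star p * (p * z) = z := fun z => by rw [← mul_assoc, hp, one_mul]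
  have cp' : ∀ z : HR, p * (star p * z) = z := fun z => by rw [← mul_assoc, hp', one_mul]
  have cq : ∀ z : HR, star q * (q * z) = z := fun z => by rw [← mul_assoc, hq, one_mul]
  refine ⟨⟨?_, ?_⟩, ?_, ?_, ?_, ?_⟩
  · intro x y
    simp [quatAut, mul_add, add_mul]
  · intro c x
    simp [quatAut]
  · refine Function.bijective_iff_has_inverse.mpr
      ⟨fun x => (star p * x.1 * p, star p * x.2 * q), ?_, ?_⟩
    · intro x
      simp [quatAut, mul_assoc, cp, hp, hq]
    · intro x
      simp [quatAut, mul_assoc, cp', hp', hq']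
  · simp [quatAut, rone, hp']
  · intro x
    simp [quatAut, rdia, rqdia_eq_star, mul_assoc]
  · intro x y
    simp [quatAut, rmul, rqdia_eq_star, mul_assoc, mul_add, add_mul, mul_sub, sub_mul, cp, cq]

theorem isAutOR_swapAut : IsAutOR swapAut := by
  refine ⟨⟨?_, ?_⟩, ?_, ?_, ?_, ?_⟩
  · intro x y
    apply OR_ext <;> simp [swapAut] <;> ring
  · intro c x
    apply OR_ext <;> simp [swapAut]
  · have h : Function.Involutive swapAut := by
      intro x
      apply OR_ext <;> simp [swapAut]
    exact h.bijective
  · apply OR_ext <;> simp [swapAut, rone]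
  · intro x
    apply OR_ext <;> simp [swapAut, rdia, rqdia_eq_star]
  · intro x y
    apply OR_ext <;> simp [swapAut, rmul, rqdia_eq_star] <;> ring

theorem IsAutOR.comp {S T : OR → OR} (hS : IsAutOR S) (hT : IsAutOR T) : IsAutOR (S ∘ T) := by
  obtain ⟨lS, bS, oS, dS, mS⟩ := hS
  obtain ⟨lT, bT, oT, dT, mT⟩ := hT
  refine ⟨⟨?_, ?_⟩, bS.comp bT, ?_, ?_, ?_⟩
  · intro x y
    simp [lT.map_add, lS.map_add]
  · intro c x
    simp [lT.map_smul, lS.map_smul]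
  · simp [oT, oS]
  · intro x
    simp [dT, dS]
  · intro x y
    simp [mT, mS]

/-- The triple isomorphism property of an automorphism followed by left multiplication of both
components by a unit quaternion. -/
theorem isATI_mul_comp {p : HR} (hp : star p * p = 1) (hp' : p * star p = 1)
    {T : OR → OR} (hT : IsAutOR T) : IsATI (fun x => (p * (T x).1, p * (T x).2)) := by
  obtain ⟨lT, bT, -, dT, mT⟩ := hT
  have cp : ∀ z : HR, star p * (p * z) = z := fun z => by rw [← mul_assoc, hp, one_mul]
  have cp' : ∀ z : HR, p * (star p * z) = z := fun z => by rw [← mul_assoc, hp', one_mul]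
  refine ⟨⟨?_, ?_⟩, ?_, ?_⟩
  · intro x y
    simp [lT.map_add, mul_add]
  · intro c x
    simp [lT.map_smul]
  · have h : Function.Bijective (fun x : OR => (p * x.1, p * x.2)) := by
      refine Function.bijective_iff_has_inverse.mpr
        ⟨fun x => (star p * x.1, star p * x.2), ?_, ?_⟩
      · intro x
        simp [cp]
      · intro x
        simp [cp']
    exact h.comp bT
  · intro x y z
    simp only [mT, dT]
    simp [rmul, rdia, rqdia_eq_star, mul_assoc, mul_add, add_mul, mul_sub, cp]

/-- Every nonzero quaternion can be normalised to a unit quaternion. -/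
theorem exists_unit_smul {x : HR} (hx : x ≠ 0) :
    ∃ c : ℝ, star (c • x) * (c • x) = 1 ∧ (c • x) * star (c • x) = 1 := by
  have hn : ‖x‖ ≠ 0 := norm_ne_zero_iff.mpr hx
  have h : Quaternion.normSq (‖x‖⁻¹ • x) = 1 := by
    rw [Quaternion.normSq_eq_norm_mul_self, norm_smul, norm_inv, norm_norm,
      inv_mul_cancel₀ hn, one_mul]
  refine ⟨‖x‖⁻¹, ?_, ?_⟩
  · rw [Quaternion.star_mul_self, h, Quaternion.coe_one]
  · rw [Quaternion.self_mul_star, h, Quaternion.coe_one]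

/-- Every quaternion is carried to the real line by right multiplication by a unit. -/
theorem exists_unit_mul_real (x : HR) : ∃ (q : HR) (r : ℝ),
    star q * q = 1 ∧ q * star q = 1 ∧ x * star q = (r : HR) ∧ star q * x = (r : HR) := by
  by_cases hx : x = 0
  · exact ⟨1, 0, by simp [hx]⟩
  · obtain ⟨c, h1, h2⟩ := exists_unit_smul hx
    refine ⟨c • x, c * Quaternion.normSq x, h1, h2, ?_, ?_⟩
    · rw [Quaternion.star_smul, mul_smul_comm, Quaternion.self_mul_star]
      simp [Quaternion.coe_mul, Quaternion.coe_mul_eq_smul]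
    · rw [Quaternion.star_smul, smul_mul_assoc, Quaternion.star_mul_self]
      simp [Quaternion.coe_mul, Quaternion.coe_mul_eq_smul]

theorem quatAut_one_e₁ (q : HR) : quatAut 1 q e₁ = e₁ := by
  simp [quatAut, e₁_eq]

theorem swapAut_e₁ : swapAut e₁ = e₁ := by
  apply OR_ext <;> simp [swapAut, e₁_eq]

/-- Part (c), with the image of `u` in coordinates. -/
theorem exists_aut_fix_e₁ (u : OR) : ∃ T : OR → OR, IsAutOR T ∧ T e₁ = e₁ ∧
    ∃ a b c : ℝ, T u = (mkQ a b c 0, 0) := by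
  obtain ⟨q, r, hq, hq', hr, -⟩ := exists_unit_mul_real u.2
  -- `x₂ (s q)⋄ = r s⋄ = r j` for `s = -j`
  set s : HR := mkQ 0 0 (-1) 0 with hs
  have hss : star s * s = 1 := by apply Quaternion.ext <;> simp [hs]
  have hss' : s * star s = 1 := by apply Quaternion.ext <;> simp [hs]
  have hsq : star (s * q) * (s * q) = 1 := by
    rw [star_mul, mul_assoc, ← mul_assoc (star s), hss, one_mul, hq]
  have hsq' : (s * q) * star (s * q) = 1 := by
    rw [star_mul, mul_assoc, ← mul_assoc q, hq', one_mul, hss']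
  have h1 : quatAut 1 (s * q) u = (u.1, (r : HR) * star s) := by
    simp [quatAut, ← mul_assoc, hr]
  set y : OR := swapAut (quatAut 1 (s * q) u) with hy
  have hy1 : y.1 = mkQ u.1.re u.1.imI 0 0 := by
    rw [hy, h1]
    apply Quaternion.ext <;> simp [swapAut, hs]
  obtain ⟨q', r', hp, hp', hr', -⟩ := exists_unit_mul_real y.2
  have h2 : quatAut 1 q' y = (mkQ u.1.re u.1.imI 0 0, (r' : HR)) := by
    simp [quatAut, hr', hy1]
  refine ⟨swapAut ∘ quatAut 1 q' ∘ swapAut ∘ quatAut 1 (s * q), ?_, ?_,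
    u.1.re, u.1.imI, r', ?_⟩
  · exact isAutOR_swapAut.comp ((isAutOR_quatAut (by simp) (by simp) hp hp').comp
      (isAutOR_swapAut.comp (isAutOR_quatAut (by simp) (by simp) hsq hsq')))
  · simp [quatAut_one_e₁, swapAut_e₁]
  · simp only [Function.comp_apply]
    rw [← hy, h2]
    apply OR_ext <;> simp [swapAut]

/-- Rotation of `b i + c j` onto the line through `i`. -/
theorem exists_unit_rotation (a b c : ℝ) : ∃ (p : HR) (n : ℝ), star p * p = 1 ∧ p * star p = 1 ∧
    p * mkQ a b c 0 * star p = mkQ a n 0 0 := by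
  by_cases hc : c = 0
  · exact ⟨1, b, by simp [hc]⟩
  · -- The half-turn about `n i + v`, where `v = b i + c j` has norm `n`, takes `v` to `n i`:
    -- both `(n i + v) v` and `n i (n i + v)` equal `n i v - n²`.
    set n := √(b ^ 2 + c ^ 2) with hn
    have hn2 : n ^ 2 = b ^ 2 + c ^ 2 := Real.sq_sqrt (by positivity)
    have hp0 : mkQ 0 (n + b) c 0 ≠ 0 := by
      intro h
      exact hc (by simpa using congrArg (fun z : HR => z.imJ) h)
    obtain ⟨d, h1, h2⟩ := exists_unit_smul hp0
    have key : mkQ 0 (n + b) c 0 * mkQ a b c 0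
        = mkQ a n 0 0 * mkQ 0 (n + b) c 0 := by
      apply Quaternion.ext <;> simp <;> linarith
    refine ⟨d • mkQ 0 (n + b) c 0, n, h1, h2, ?_⟩
    rw [smul_mul_assoc, key, ← mul_smul_comm, mul_assoc, h2, mul_one]

/-- Part (b), with the image of `u` in coordinates. -/
theorem exists_aut_complex (u : OR) : ∃ T : OR → OR, IsAutOR T ∧
    ∃ a b : ℝ, T u = (mkQ a b 0 0, 0) := by
  obtain ⟨T, hT, -, a, b, c, h⟩ := exists_aut_fix_e₁ u
  obtain ⟨p, n, hp, hp', hn⟩ := exists_unit_rotation a b c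
  refine ⟨quatAut p 1 ∘ T, (isAutOR_quatAut hp hp' (by simp) (by simp)).comp hT, a, n, ?_⟩
  simp [h, quatAut, hn]

/-- Let `u ∈ 𝕆_ℝ` be nonzero. Then:
(a) there is an asymmetric triple isomorphism `T` of `𝕆_ℝ` with `T(u) ∈ ℝ·1`;
(b) there is an automorphism `T` of `𝕆_ℝ` with `T(u) ∈ span_ℝ{e₀, e₁}`;
(c) there is an automorphism `T` of `𝕆_ℝ` with `T(e₁) = e₁` and
`T(u) ∈ span_ℝ{e₀, e₁, e₂}`. -/
theorem statement10 (u : OR) (hu : u ≠ 0) :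
    (∃ T : OR → OR, IsATI T ∧ ∃ r : ℝ, T u = r • rone) ∧
    (∃ T : OR → OR, IsAutOR T ∧ T u ∈ Submodule.span ℝ ({e₀, e₁} : Set OR)) ∧
    (∃ T : OR → OR, IsAutOR T ∧ T e₁ = e₁ ∧
      T u ∈ Submodule.span ℝ ({e₀, e₁, e₂} : Set OR)) := by
  obtain ⟨T, hT, a, b, h⟩ := exists_aut_complex u
  refine ⟨?_, ⟨T, hT, ?_⟩, ?_⟩
  · obtain ⟨q, r, hq, hq', -, hr⟩ := exists_unit_mul_real (mkQ a b 0 0)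
    refine ⟨_, isATI_mul_comp (p := star q) (by simpa using hq') (by simpa using hq) hT, r, ?_⟩
    simp only [h, hr]
    apply OR_ext <;> simp [rone]
  · rw [Submodule.mem_span_pair]
    refine ⟨a, b, ?_⟩
    rw [h]
    apply OR_ext <;> simp [e₀, e₁_eq, rone]
  · obtain ⟨S, hS, hS1, a, b, c, h⟩ := exists_aut_fix_e₁ u
    refine ⟨S, hS, hS1, ?_⟩
    rw [Submodule.mem_span_triple]
    refine ⟨a, b, c, ?_⟩
    rw [h]
    apply OR_ext <;> simp [e₀, e₁_eq, e₂_eq, rone]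
end
end
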